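/- arXiv:1705.06790 — 2 statements merged into one kernel-verified Lean document; each statement's English description precedes it below -/
import Mathlib

section
/- (Zero asymptotic relative error for chained linear cascades.) Assume Condition (★) in full. Then for every i ∈ {1,…,n} and every initial condition (x_1,…,x_n), lim_{t→∞} ‖Π_i ∘ Lin^{∘t}(x_1,…,x_n) − L_i^{t} pert_i(x_1,…,x_i)‖_{ℂ^{d_i}} / ‖L_i‖^{t} = 0. -/
/-!
Write `p j = pert j x`. The matrices `D i j` are built to solve the Sylvester equations
`L (i+1) * D (i+1) j - D (i+1) j * L j = C i * D i j` for `j ≤ i`: in eigenbases the operator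
`X ↦ L (i+1) X - X L j` multiplies the `(ℓ, m)` entry by `λ_{i+1,ℓ} - λ_{j,m}`, which is nonzero
because the spectra are disjoint.
Consequently the trajectory has the closed form
`Π_i (Lin^t x) = ∑_{j ≤ i} (-1)^(i-j) D i j (L j)^t p j` (`LinStep_iterate`): the right-hand side
satisfies the cascade recursion, and the definition of `pert` makes it agree with `x` at `t = 0`.
Its `j = i` term is `(L i)^t p i`; the remaining ones are `O(‖L j‖^t)` with `j < i`, hence
`o(‖L i‖^t)` by monotonicity of the norms.
-/

open Matrix Finset Filter Topology

noncomputable section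

/-- A matrix acting as a continuous linear map between Euclidean spaces. -/
def matCLM {p q : ℕ} (M : Matrix (Fin p) (Fin q) ℂ) :
    EuclideanSpace ℂ (Fin q) →L[ℂ] EuclideanSpace ℂ (Fin p) :=
  LinearMap.toContinuousLinearMap (Matrix.toEuclideanLin M)

/-- Operator norm of a matrix induced by the Euclidean norms. -/
def opN {p q : ℕ} (M : Matrix (Fin p) (Fin q) ℂ) : ℝ := ‖matCLM M‖

/-- One step of the chained linear cascade (levels indexed from `0`). -/
def LinStep {d : ℕ → ℕ} (L : ∀ i, Matrix (Fin (d i)) (Fin (d i)) ℂ)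
    (C : ∀ i, Matrix (Fin (d (i+1))) (Fin (d i)) ℂ)
    (x : ∀ i, EuclideanSpace ℂ (Fin (d i))) (i : ℕ) :
    EuclideanSpace ℂ (Fin (d i)) :=
  match i with
  | 0 => matCLM (L 0) (x 0)
  | (i+1) => matCLM (L (i+1)) (x (i+1)) + matCLM (C i) (x i)

/-- The matrices `D_{i,j}` of the paper (levels indexed from `0`). -/
def Dmat {d : ℕ → ℕ} (L : ∀ i, Matrix (Fin (d i)) (Fin (d i)) ℂ)
    (C : ∀ i, Matrix (Fin (d (i+1))) (Fin (d i)) ℂ)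
    (V : ∀ i, Matrix (Fin (d i)) (Fin (d i)) ℂ)
    (ev : ∀ i, Fin (d i) → ℂ) : ∀ i j : ℕ, Matrix (Fin (d i)) (Fin (d j)) ℂ
  | 0, 0 => 1
  | 0, _ + 1 => 0
  | i + 1, j =>
    if h : j = i + 1 then by subst h; exact 1
    else
      (L (i+1))⁻¹ * V (i+1) *
        Matrix.of (fun ℓ m =>
          ((V (i+1))⁻¹ * C i * Dmat L C V ev i j * V j) ℓ m
            * (1 - ev j m / ev (i+1) ℓ)⁻¹) * (V j)⁻¹

/-- The perturbation maps `pert_i` of the paper (levels indexed from `0`). -/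
def pert {d : ℕ → ℕ} (L : ∀ i, Matrix (Fin (d i)) (Fin (d i)) ℂ)
    (C : ∀ i, Matrix (Fin (d (i+1))) (Fin (d i)) ℂ)
    (V : ∀ i, Matrix (Fin (d i)) (Fin (d i)) ℂ)
    (ev : ∀ i, Fin (d i) → ℂ)
    (x : ∀ k, EuclideanSpace ℂ (Fin (d k))) : ∀ i : ℕ, EuclideanSpace ℂ (Fin (d i))
  | 0 => x 0
  | i + 1 => x (i+1) + ∑ j ∈ (Finset.range (i+1)).attach,
      ((-1 : ℂ) ^ (i - j.1)) • matCLM (Dmat L C V ev (i+1) j.1) (pert L C V ev x j.1)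
  termination_by i => i
  decreasing_by exact Finset.mem_range.mp j.2

/-- The `s`-th principal eigenfunction of component system `i`. -/
def psi {d : ℕ → ℕ} (V : ∀ i, Matrix (Fin (d i)) (Fin (d i)) ℂ) (i : ℕ) (s : Fin (d i)) :
    EuclideanSpace ℂ (Fin (d i)) →L[ℂ] ℂ :=
  (EuclideanSpace.proj s).comp (matCLM (V i)⁻¹)

lemma matCLM_mul_apply {p q r : ℕ} (A : Matrix (Fin p) (Fin q) ℂ) (B : Matrix (Fin q) (Fin r) ℂ)
    (v : EuclideanSpace ℂ (Fin r)) : matCLM (A * B) v = matCLM A (matCLM B v) := by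
  ext k
  simp [matCLM, Matrix.toLpLin_apply, Matrix.mulVec_mulVec]

lemma matCLM_sub_apply {p q : ℕ} (A B : Matrix (Fin p) (Fin q) ℂ)
    (v : EuclideanSpace ℂ (Fin q)) : matCLM (A - B) v = matCLM A v - matCLM B v := by
  simp [matCLM]

lemma matCLM_one_apply {p : ℕ} (v : EuclideanSpace ℂ (Fin p)) :
    matCLM (1 : Matrix (Fin p) (Fin p) ℂ) v = v := by
  ext k
  simp [matCLM]

lemma norm_matCLM_pow_apply_le {p : ℕ} (A : Matrix (Fin p) (Fin p) ℂ) (t : ℕ)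
    (v : EuclideanSpace ℂ (Fin p)) : ‖matCLM (A ^ t) v‖ ≤ opN A ^ t * ‖v‖ := by
  induction t with
  | zero => simp [matCLM_one_apply]
  | succ t ih =>
    rw [pow_succ', matCLM_mul_apply]
    calc _ ≤ opN A * ‖matCLM (A ^ t) v‖ := (matCLM A).le_opNorm _
      _ ≤ opN A * (opN A ^ t * ‖v‖) := mul_le_mul_of_nonneg_left ih (norm_nonneg _)
      _ = _ := by ring

lemma eigenvalue_ne_zero {p : ℕ} {A V : Matrix (Fin p) (Fin p) ℂ} {a : Fin p → ℂ}
    (h : A = V * Matrix.diagonal a * V⁻¹) (hA : IsUnit A) (l : Fin p) : a l ≠ 0 := by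
  have hdet := ((Matrix.isUnit_iff_isUnit_det A).1 hA).ne_zero
  rw [h, Matrix.det_mul, Matrix.det_mul, Matrix.det_diagonal] at hdet
  exact Finset.prod_ne_zero_iff.1 (right_ne_zero_of_mul (left_ne_zero_of_mul hdet)) l
    (Finset.mem_univ l)

/-- The matrix defining `Dmat` solves the Sylvester equation `A X - X B = M` for diagonalizable
`A` and `B` with disjoint spectra. -/
lemma sylvester {p q : ℕ} {A V : Matrix (Fin p) (Fin p) ℂ} {a : Fin p → ℂ}
    {B W : Matrix (Fin q) (Fin q) ℂ} {b : Fin q → ℂ}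
    (hA : A = V * Matrix.diagonal a * V⁻¹) (hB : B = W * Matrix.diagonal b * W⁻¹)
    (hV : IsUnit V) (hW : IsUnit W) (hAu : IsUnit A) (hab : ∀ l m, a l ≠ b m)
    (M : Matrix (Fin p) (Fin q) ℂ) :
    A * (A⁻¹ * V * Matrix.of (fun l m => (V⁻¹ * M * W) l m * (1 - b m / a l)⁻¹) * W⁻¹)
      - (A⁻¹ * V * Matrix.of (fun l m => (V⁻¹ * M * W) l m * (1 - b m / a l)⁻¹) * W⁻¹) * B
      = M := by
  have ha := eigenvalue_ne_zero hA hAu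
  have hVd := (Matrix.isUnit_iff_isUnit_det V).1 hV
  have hWd := (Matrix.isUnit_iff_isUnit_det W).1 hW
  have hAd := (Matrix.isUnit_iff_isUnit_det A).1 hAu
  set K := V⁻¹ * M * W with hK
  set T : Matrix (Fin p) (Fin q) ℂ := Matrix.of (fun l m => K l m * (1 - b m / a l)⁻¹) with hT
  have hM : M = V * K * W⁻¹ := by
    rw [hK, ← Matrix.mul_assoc, Matrix.mul_nonsing_inv_cancel_right _ _ hWd,
      Matrix.mul_nonsing_inv_cancel_left _ _ hVd]
  have hinv : A⁻¹ * V = V * Matrix.diagonal (fun l => (a l)⁻¹) := by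
    have h1 : A * (V * Matrix.diagonal (fun l => (a l)⁻¹)) = V := by
      rw [hA, ← Matrix.mul_assoc, Matrix.nonsing_inv_mul_cancel_right _ _ hVd, Matrix.mul_assoc,
        Matrix.diagonal_mul_diagonal]
      simp [ha]
    calc A⁻¹ * V = A⁻¹ * (A * (V * Matrix.diagonal (fun l => (a l)⁻¹))) := by rw [h1]
      _ = _ := Matrix.nonsing_inv_mul_cancel_left _ _ hAd
  have hE : T - Matrix.diagonal (fun l => (a l)⁻¹) * T * Matrix.diagonal b = K := by
    ext l m
    simp only [Matrix.sub_apply, Matrix.mul_diagonal, Matrix.diagonal_mul, hT, Matrix.of_apply]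
    have h1 : a l - b m ≠ 0 := sub_ne_zero.2 (hab l m)
    have h2 : 1 - b m / a l = (a l - b m) / a l := by field_simp [ha l]
    have h3 := ha l
    rw [h2]
    field_simp
  have h1 : A * (A⁻¹ * V * T * W⁻¹) = V * T * W⁻¹ := by
    simp only [Matrix.mul_assoc]
    exact Matrix.mul_nonsing_inv_cancel_left _ _ hAd
  have h2 : A⁻¹ * V * T * W⁻¹ * B
      = V * (Matrix.diagonal (fun l => (a l)⁻¹) * T * Matrix.diagonal b) * W⁻¹ := by
    rw [hinv, hB, ← Matrix.mul_assoc, ← Matrix.mul_assoc,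
      Matrix.nonsing_inv_mul_cancel_right _ _ hWd]
    simp only [Matrix.mul_assoc]
  rw [h1, h2, ← Matrix.sub_mul, ← Matrix.mul_sub, hE, ← hM]

section Cascade

variable {d : ℕ → ℕ} (L : ∀ i, Matrix (Fin (d i)) (Fin (d i)) ℂ)
    (C : ∀ i, Matrix (Fin (d (i+1))) (Fin (d i)) ℂ)
    (V : ∀ i, Matrix (Fin (d i)) (Fin (d i)) ℂ)
    (ev : ∀ i, Fin (d i) → ℂ)

lemma Dmat_self (i : ℕ) : Dmat L C V ev i i = 1 := by
  cases i <;> simp [Dmat]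

lemma Dmat_sylvester
    (hdiag : ∀ i, L i = V i * Matrix.diagonal (ev i) * (V i)⁻¹)
    (hV : ∀ i, IsUnit (V i)) (hLu : ∀ i, IsUnit (L i))
    (hsp : ∀ i j : ℕ, i ≠ j → ∀ ℓ m, ev i ℓ ≠ ev j m)
    {i j : ℕ} (hij : j ≤ i) :
    L (i+1) * Dmat L C V ev (i+1) j - Dmat L C V ev (i+1) j * L j = C i * Dmat L C V ev i j := by
  have hne : j ≠ i + 1 := by omega
  have h := sylvester (hdiag (i+1)) (hdiag j) (hV _) (hV _) (hLu _) (hsp _ _ hne.symm)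
    (C i * Dmat L C V ev i j)
  rw [← Matrix.mul_assoc (V (i+1))⁻¹] at h
  rw [Dmat, dif_neg hne]
  exact h

/-- Closed form of the trajectory of the cascade. At `t = 0` it is the definition of `pert` solved
for `x i`; the induction step in `t` is the Sylvester equation for each pair of levels. -/
lemma LinStep_iterate
    (hdiag : ∀ i, L i = V i * Matrix.diagonal (ev i) * (V i)⁻¹)
    (hV : ∀ i, IsUnit (V i)) (hLu : ∀ i, IsUnit (L i))
    (hsp : ∀ i j : ℕ, i ≠ j → ∀ ℓ m, ev i ℓ ≠ ev j m)
    (x : ∀ i, EuclideanSpace ℂ (Fin (d i))) (t i : ℕ) :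
    (LinStep L C)^[t] x i = ∑ j ∈ Finset.range (i+1),
      ((-1 : ℂ) ^ (i - j)) •
        matCLM (Dmat L C V ev i j) (matCLM (L j ^ t) (pert L C V ev x j)) := by
  induction t generalizing i with
  | zero =>
    cases i with
    | zero => simp [Dmat_self, matCLM_one_apply, pert]
    | succ i =>
      rw [Finset.sum_range_succ]
      simp only [pow_zero, matCLM_one_apply, Dmat_self, Nat.sub_self, one_smul,
        Function.iterate_zero, id_eq]
      rw [pert, Finset.sum_attach (Finset.range (i+1)) (fun j => ((-1 : ℂ) ^ (i - j)) •
        matCLM (Dmat L C V ev (i+1) j) (pert L C V ev x j)), add_left_comm,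
        ← Finset.sum_add_distrib, Finset.sum_eq_zero, add_zero]
      intro j hj
      have : i + 1 - j = (i - j) + 1 := by have := Finset.mem_range.1 hj; omega
      rw [this, pow_succ]
      simp
  | succ t ih =>
    rw [Function.iterate_succ_apply']
    cases i with
    | zero => simp [LinStep, ih, Dmat_self, matCLM_one_apply, pow_succ', matCLM_mul_apply]
    | succ i =>
      simp only [LinStep]
      rw [ih, ih, Finset.sum_range_succ, Finset.sum_range_succ _ (i+1), map_add, map_sum, map_sum,
        add_right_comm, ← Finset.sum_add_distrib]
      congr 1
      · refine Finset.sum_congr rfl fun j hj => ?_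
        have hj' : j ≤ i := Nat.lt_succ_iff.1 (Finset.mem_range.1 hj)
        have h1 : i + 1 - j = (i - j) + 1 := by omega
        have h2 := Dmat_sylvester L C V ev hdiag hV hLu hsp hj'
        rw [map_smul, map_smul, ← matCLM_mul_apply (C i), ← h2, matCLM_sub_apply,
          pow_succ' (L j), matCLM_mul_apply, matCLM_mul_apply, matCLM_mul_apply, h1, pow_succ]
        module
      · simp [Dmat_self, matCLM_one_apply, pow_succ', matCLM_mul_apply]

end Cascade

/-- zero asymptotic relative error for chained linear cascades,
Condition (★) in full. Levels are indexed from `0`, so the quantifier over all `i : ℕ`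
corresponds to the paper's `i ∈ {1,…,n}`. -/
theorem stmt5 {d : ℕ → ℕ} (L : ∀ i, Matrix (Fin (d i)) (Fin (d i)) ℂ)
    (C : ∀ i, Matrix (Fin (d (i+1))) (Fin (d i)) ℂ)
    (V : ∀ i, Matrix (Fin (d i)) (Fin (d i)) ℂ)
    (ev : ∀ i, Fin (d i) → ℂ)
    (hdiag : ∀ i, L i = V i * Matrix.diagonal (ev i) * (V i)⁻¹)
    (hV : ∀ i, IsUnit (V i))
    (hLu : ∀ i, IsUnit (L i))
    (hsp : ∀ i j : ℕ, i ≠ j → ∀ ℓ m, ev i ℓ ≠ ev j m)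
    (hmono : ∀ i, opN (L i) < opN (L (i+1)))
    (hone : ∀ i, opN (L i) ≤ 1)
    (x : ∀ i, EuclideanSpace ℂ (Fin (d i))) (i : ℕ) :
    Tendsto
      (fun t : ℕ =>
        ‖(LinStep L C)^[t] x i - matCLM ((L i) ^ t) (pert L C V ev x i)‖ / opN (L i) ^ t)
      atTop (𝓝 0) := by
  have hkey : ∀ t : ℕ, (LinStep L C)^[t] x i - matCLM ((L i) ^ t) (pert L C V ev x i)
      = ∑ j ∈ Finset.range i, ((-1 : ℂ) ^ (i - j)) •
        matCLM (Dmat L C V ev i j) (matCLM (L j ^ t) (pert L C V ev x j)) := by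
    intro t
    rw [LinStep_iterate L C V ev hdiag hV hLu hsp, Finset.sum_range_succ]
    simp [Dmat_self, matCLM_one_apply]
  -- The geometric bounds below have ratios `opN (L j) / opN (L i) < 1`; each `j < i` also forces
  -- `opN (L i) > 0`, so the divisions are genuine.
  have hlt : ∀ j < i, opN (L j) < opN (L i) := fun j hj => strictMono_nat_of_lt_succ hmono hj
  have hnn : ∀ j, 0 ≤ opN (L j) := fun j => norm_nonneg _
  refine squeeze_zero (g := fun t => ∑ j ∈ Finset.range i,
    opN (Dmat L C V ev i j) * ‖pert L C V ev x j‖ * (opN (L j) / opN (L i)) ^ t)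
    (fun t => div_nonneg (norm_nonneg _) (pow_nonneg (hnn i) t)) (fun t => ?_) ?_
  · rw [hkey]
    calc _ ≤ (∑ j ∈ Finset.range i,
          opN (Dmat L C V ev i j) * (opN (L j) ^ t * ‖pert L C V ev x j‖)) / opN (L i) ^ t := by
          refine div_le_div_of_nonneg_right (norm_sum_le_of_le _ fun j _ => ?_)
            (pow_nonneg (hnn i) t)
          rw [norm_smul, norm_pow, norm_neg, norm_one, one_pow, one_mul]
          exact ((matCLM (Dmat L C V ev i j)).le_opNorm _).trans
            (mul_le_mul_of_nonneg_left (norm_matCLM_pow_apply_le _ _ _) (norm_nonneg _))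
      _ = _ := by
          rw [Finset.sum_div]
          refine Finset.sum_congr rfl fun j _ => ?_
          rw [div_pow]
          ring
  · rw [← Finset.sum_const_zero (s := Finset.range i)]
    refine tendsto_finsetSum _ fun j hj => ?_
    have h := hlt j (Finset.mem_range.1 hj)
    have hr := tendsto_pow_atTop_nhds_zero_of_lt_one (div_nonneg (hnn j) (hnn i))
      ((div_lt_one ((hnn j).trans_lt h)).2 h)
    simpa using hr.const_mul (opN (Dmat L C V ev i j) * ‖pert L C V ev x j‖)
end
end

section
/- (Two-layer cascade: explicit conjugation of the flow.) Let n = 2 and assume Condition (★)(i)–(ii) for L_1, L_2 with coupling C_{2,1}. With pert(x_1,x_2) = (x_1, D_{2,1} x_1 + x_2), for every t ≥ 0 and every (x_1,x_2) ∈ ℂ^{d_1}×ℂ^{d_2}: pert(Lin^{∘t}(x_1,x_2)) = (L_1^{t} x_1, L_2^{t}(D_{2,1} x_1 + x_2)); consequently, for every s_2 ∈ {1,…,d_2}, the function (ψ_{(0,s_2)} ∘ pert)(x_1,x_2) = ψ_{2,s_2}(D_{2,1} x_1 + x_2) satisfies (ψ_{(0,s_2)} ∘ pert)(Lin^{∘t}(x_1,x_2))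 = λ_{2,s_2}^{t} · (ψ_{(0,s_2)} ∘ pert)(x_1,x_2). -/
/-!
With `Λᵢ = diagonal evᵢ`, the factor `(1 - λ₁ₘ/λ₂ₗ)⁻¹` makes `C̃ = C̃₂₁` the solution of the
entrywise equation `C̃ Λ₁ + Λ₂ (V₂⁻¹ C₂₁ V₁) = Λ₂ C̃`. Conjugating back by `V₁, V₂`, this says that
`D₂₁` solves the Sylvester equation `D₂₁ L₁ + C₂₁ = L₂ D₂₁` (`sylvester_eq`), i.e. that
`y = D₂₁ x₁ + x₂` evolves by `y ↦ L₂ y` along one step of the cascade. Iterating gives the conjugation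
of the flow (`flow_conj`), and the rows of `V₂⁻¹` are left eigenvectors of `L₂`, hence of `L₂ᵗ`
(`inv_mul_pow`).
-/

open Matrix Finset

noncomputable section

/-- One step of the two-layer chained linear cascade
`x₁ ↦ L₁ x₁`, `x₂ ↦ L₂ x₂ + C₂₁ x₁`. -/
def Lin2 {d1 d2 : ℕ} (L1 : Matrix (Fin d1) (Fin d1) ℂ) (L2 : Matrix (Fin d2) (Fin d2) ℂ)
    (C21 : Matrix (Fin d2) (Fin d1) ℂ)
    (p : EuclideanSpace ℂ (Fin d1) × EuclideanSpace ℂ (Fin d2)) :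
    EuclideanSpace ℂ (Fin d1) × EuclideanSpace ℂ (Fin d2) :=
  (matCLM L1 p.1, matCLM L2 p.2 + matCLM C21 p.1)

theorem matCLM_mul {p q r : ℕ} (A : Matrix (Fin p) (Fin q) ℂ) (B : Matrix (Fin q) (Fin r) ℂ)
    (x : EuclideanSpace ℂ (Fin r)) : matCLM (A * B) x = matCLM A (matCLM B x) := by
  simp [matCLM, Matrix.toLpLin_apply, Matrix.mulVec_mulVec]

theorem matCLM_add {p q : ℕ} (A B : Matrix (Fin p) (Fin q) ℂ)
    (x : EuclideanSpace ℂ (Fin q)) : matCLM (A + B) x = matCLM A x + matCLM B x := by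
  simp [matCLM]

theorem matCLM_one {p : ℕ} (x : EuclideanSpace ℂ (Fin p)) :
    matCLM (1 : Matrix (Fin p) (Fin p) ℂ) x = x := by
  simp [matCLM]

/-- The matrix `D₂₁` solves the Sylvester equation `D₂₁ L₁ + C₂₁ = L₂ D₂₁`. -/
theorem sylvester_eq {d1 d2 : ℕ}
    (L1 : Matrix (Fin d1) (Fin d1) ℂ) (L2 : Matrix (Fin d2) (Fin d2) ℂ)
    (C21 : Matrix (Fin d2) (Fin d1) ℂ)
    (V1 : Matrix (Fin d1) (Fin d1) ℂ) (V2 : Matrix (Fin d2) (Fin d2) ℂ)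
    (ev1 : Fin d1 → ℂ) (ev2 : Fin d2 → ℂ)
    (hdiag1 : L1 = V1 * Matrix.diagonal ev1 * V1⁻¹)
    (hdiag2 : L2 = V2 * Matrix.diagonal ev2 * V2⁻¹)
    (hV1 : IsUnit V1) (hV2 : IsUnit V2) (hL2 : IsUnit L2)
    (hsp : ∀ ℓ m, ev2 ℓ ≠ ev1 m) :
    (L2⁻¹ * V2 *
      (Matrix.of fun ℓ m => (V2⁻¹ * C21 * V1) ℓ m * (1 - ev1 m / ev2 ℓ)⁻¹) * V1⁻¹) * L1 + C21
      = L2 * (L2⁻¹ * V2 *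
      (Matrix.of fun ℓ m => (V2⁻¹ * C21 * V1) ℓ m * (1 - ev1 m / ev2 ℓ)⁻¹) * V1⁻¹) := by
  have h1 := (Matrix.isUnit_iff_isUnit_det _).1 hV1
  have h2 := (Matrix.isUnit_iff_isUnit_det _).1 hV2
  have hl := (Matrix.isUnit_iff_isUnit_det _).1 hL2
  have hev : ∀ ℓ, ev2 ℓ ≠ 0 := by
    have h : L2.det = ∏ i, ev2 i := by
      rw [hdiag2, Matrix.det_conj hV2, Matrix.det_diagonal]
    have h0 := hl.ne_zero
    rw [h, Finset.prod_ne_zero_iff] at h0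
    exact fun ℓ => h0 ℓ (Finset.mem_univ ℓ)
  set Ct : Matrix (Fin d2) (Fin d1) ℂ :=
    Matrix.of fun ℓ m => (V2⁻¹ * C21 * V1) ℓ m * (1 - ev1 m / ev2 ℓ)⁻¹ with hCt
  have key : Ct * Matrix.diagonal ev1 + Matrix.diagonal ev2 * (V2⁻¹ * C21 * V1)
      = Matrix.diagonal ev2 * Ct := by
    ext ℓ m
    rw [Matrix.add_apply, Matrix.mul_diagonal, Matrix.diagonal_mul, Matrix.diagonal_mul, hCt,
      Matrix.of_apply]
    have ha := hev ℓ
    have hb : ev2 ℓ - ev1 m ≠ 0 := sub_ne_zero.2 (hsp ℓ m)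
    have hc : (1 - ev1 m / ev2 ℓ) = (ev2 ℓ - ev1 m) / ev2 ℓ := by field_simp
    rw [hc]
    field_simp
    ring
  -- `L₂` is injective, so the equation may be checked after multiplying by it on the left.
  have inj : ∀ A B : Matrix (Fin d2) (Fin d1) ℂ, L2 * A = L2 * B → A = B := fun A B h => by
    rw [← Matrix.nonsing_inv_mul_cancel_left L2 A hl, h,
      Matrix.nonsing_inv_mul_cancel_left L2 B hl]
  apply inj
  have e1 : L2 * (L2⁻¹ * V2 * Ct * V1⁻¹) = V2 * Ct * V1⁻¹ := by
    simp only [Matrix.mul_assoc, Matrix.mul_nonsing_inv_cancel_left _ _ hl]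
  rw [Matrix.mul_add, ← Matrix.mul_assoc, e1]
  have e2 : V2 * Ct * V1⁻¹ * L1 = V2 * (Ct * Matrix.diagonal ev1) * V1⁻¹ := by
    rw [hdiag1]
    simp only [Matrix.mul_assoc, Matrix.nonsing_inv_mul_cancel_left _ _ h1]
  have e3 : L2 * C21 = V2 * (Matrix.diagonal ev2 * (V2⁻¹ * C21 * V1)) * V1⁻¹ := by
    rw [hdiag2]
    simp only [Matrix.mul_assoc, Matrix.mul_nonsing_inv _ h1, Matrix.mul_one]
  have e4 : L2 * (V2 * Ct * V1⁻¹) = V2 * (Matrix.diagonal ev2 * Ct) * V1⁻¹ := by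
    rw [hdiag2]
    simp only [Matrix.mul_assoc, Matrix.nonsing_inv_mul_cancel_left _ _ h2]
  rw [e2, e3, e4, ← key, Matrix.mul_add, Matrix.add_mul]

/-- Any solution `D` of the Sylvester equation conjugates the cascade, via
`(x₁, x₂) ↦ (x₁, D x₁ + x₂)`, to the uncoupled system. -/
theorem flow_conj {d1 d2 : ℕ}
    (L1 : Matrix (Fin d1) (Fin d1) ℂ) (L2 : Matrix (Fin d2) (Fin d2) ℂ)
    (C21 D : Matrix (Fin d2) (Fin d1) ℂ) (hS : D * L1 + C21 = L2 * D)
    (t : ℕ) (x1 : EuclideanSpace ℂ (Fin d1)) (x2 : EuclideanSpace ℂ (Fin d2)) :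
    ((Lin2 L1 L2 C21)^[t] (x1, x2)).1 = matCLM (L1 ^ t) x1 ∧
      matCLM D ((Lin2 L1 L2 C21)^[t] (x1, x2)).1 + ((Lin2 L1 L2 C21)^[t] (x1, x2)).2
        = matCLM (L2 ^ t) (matCLM D x1 + x2) := by
  induction t with
  | zero => simp [matCLM_one]
  | succ t ih =>
    obtain ⟨ih1, ih2⟩ := ih
    rw [Function.iterate_succ_apply']
    set p := (Lin2 L1 L2 C21)^[t] (x1, x2)
    refine ⟨?_, ?_⟩
    · rw [pow_succ', matCLM_mul, ← ih1, Lin2]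
    · rw [pow_succ', matCLM_mul, ← ih2, map_add, ← matCLM_mul L2 D, ← hS, matCLM_add, matCLM_mul]
      simp only [Lin2]
      abel

/-- The rows of `V⁻¹` are left eigenvectors of every power of `V * diagonal ev * V⁻¹`. -/
theorem inv_mul_pow {d : ℕ} (V : Matrix (Fin d) (Fin d) ℂ) (ev : Fin d → ℂ) (hV : IsUnit V)
    (t : ℕ) : V⁻¹ * (V * Matrix.diagonal ev * V⁻¹) ^ t = Matrix.diagonal (ev ^ t) * V⁻¹ := by
  have h := (Matrix.isUnit_iff_isUnit_det _).1 hV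
  rw [← Matrix.diagonal_pow]
  induction t with
  | zero => simp
  | succ t ih =>
    rw [pow_succ, ← Matrix.mul_assoc, ih, pow_succ]
    simp only [Matrix.mul_assoc, Matrix.nonsing_inv_mul_cancel_left _ _ h]

/-- two-layer cascade: explicit conjugation of the flow and the eigenfunction
consequence. Under Condition (★)(i)–(ii) for `L₁, L₂` with coupling `C₂₁`, with
`D₂₁ = L₂⁻¹ V₂ C̃₂₁ V₁⁻¹` where `[C̃₂₁]_{ℓ,m} = [V₂⁻¹ C₂₁ V₁]_{ℓ,m} (1 − λ_{1,m}/λ_{2,ℓ})⁻¹`,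
and `pert(x₁,x₂) = (x₁, D₂₁ x₁ + x₂)`:
`pert(Lin^{∘t}(x₁,x₂)) = (L₁ᵗ x₁, L₂ᵗ (D₂₁ x₁ + x₂))`, and consequently for every `s₂`,
`(ψ_{(0,s₂)} ∘ pert)(Lin^{∘t}(x₁,x₂)) = λ_{2,s₂}ᵗ (ψ_{(0,s₂)} ∘ pert)(x₁,x₂)`, where
`(ψ_{(0,s₂)} ∘ pert)(x₁,x₂) = ψ_{2,s₂}(D₂₁ x₁ + x₂)` and `ψ_{2,s}(y) = (V₂⁻¹ y)_s`. -/
theorem stmt12 {d1 d2 : ℕ}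
    (L1 : Matrix (Fin d1) (Fin d1) ℂ) (L2 : Matrix (Fin d2) (Fin d2) ℂ)
    (C21 : Matrix (Fin d2) (Fin d1) ℂ)
    (V1 : Matrix (Fin d1) (Fin d1) ℂ) (V2 : Matrix (Fin d2) (Fin d2) ℂ)
    (ev1 : Fin d1 → ℂ) (ev2 : Fin d2 → ℂ)
    (hdiag1 : L1 = V1 * Matrix.diagonal ev1 * V1⁻¹)
    (hdiag2 : L2 = V2 * Matrix.diagonal ev2 * V2⁻¹)
    (hV1 : IsUnit V1) (hV2 : IsUnit V2)
    (hL1 : IsUnit L1) (hL2 : IsUnit L2)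
    (hsp : ∀ ℓ m, ev2 ℓ ≠ ev1 m)
    (D21 : Matrix (Fin d2) (Fin d1) ℂ)
    (hD21 : D21 = L2⁻¹ * V2 *
      (Matrix.of fun ℓ m => (V2⁻¹ * C21 * V1) ℓ m * (1 - ev1 m / ev2 ℓ)⁻¹) * V1⁻¹)
    (t : ℕ) (x1 : EuclideanSpace ℂ (Fin d1)) (x2 : EuclideanSpace ℂ (Fin d2)) :
    (((Lin2 L1 L2 C21)^[t] (x1, x2)).1,
        matCLM D21 ((Lin2 L1 L2 C21)^[t] (x1, x2)).1 + ((Lin2 L1 L2 C21)^[t] (x1, x2)).2)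
      = (matCLM (L1 ^ t) x1, matCLM (L2 ^ t) (matCLM D21 x1 + x2))
    ∧ ∀ s2 : Fin d2,
        (EuclideanSpace.proj s2).comp (matCLM V2⁻¹)
            (matCLM D21 ((Lin2 L1 L2 C21)^[t] (x1, x2)).1
              + ((Lin2 L1 L2 C21)^[t] (x1, x2)).2)
          = ev2 s2 ^ t *
            (EuclideanSpace.proj s2).comp (matCLM V2⁻¹) (matCLM D21 x1 + x2) := by
  have hS : D21 * L1 + C21 = L2 * D21 := by
    rw [hD21]
    exact sylvester_eq L1 L2 C21 V1 V2 ev1 ev2 hdiag1 hdiag2 hV1 hV2 hL2 hsp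
  obtain ⟨h1, h2⟩ := flow_conj L1 L2 C21 D21 hS t x1 x2
  refine ⟨Prod.ext h1 h2, fun s2 => ?_⟩
  rw [h2]
  simp only [ContinuousLinearMap.comp_apply]
  rw [← matCLM_mul, hdiag2, inv_mul_pow V2 ev2 hV2, matCLM_mul]
  generalize matCLM V2⁻¹ (matCLM D21 x1 + x2) = w
  simp [matCLM, Matrix.toLpLin_apply, Matrix.mulVec_diagonal]
end
end
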